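/- Subject reduction, part two: if Γ,a,Δ ⊢ M is derivable and b is a variable with a ∈ ⋃_{i≥1} FV_i(a,Δ ⊢ M) and b ∉ ⋃_{i≥1} FV_i(a,Δ ⊢ M) (so that the α₂-step Γ,a,Δ ⊢ M ⇝ Γ,b,Δ ⊢ ⇑_Δ⟨π_b, b\a⟩∘M applies), then the judgement Γ,b,Δ ⊢ ⇑_Δ⟨π_b, b\a⟩∘M is derivable. Equivalently: if Γ ⊢ λa.λΔ.M is derivable, then Γ ⊢ λb.λΔ.(⇑_Δ⟨π_b, b\a⟩∘M) is derivable. -/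

import Mathlib

/- Named terms and substitutions of the λπ-calculus. Variables are natural numbers. -/
mutual
inductive Tm : Type
  | var : ℕ → Tm
  | app : Tm → Tm → Tm
  | lam : ℕ → Tm → Tm
  | clos : Subst → Tm → Tm
inductive Subst : Type
  | id : Subst
  | pi : ℕ → Subst
  | cons : Subst → Tm → ℕ → Subst
  | comp : Subst → Subst → Subst
end

/- Contexts are lists of variables; the head of the list is the *rightmost* variable,
so the context `Γ, a` of the paper is `a :: Γ`. -/
mutual
/-- `WfTm Γ M` is the judgement `Γ ⊢ M`. -/
inductive WfTm : List ℕ → Tm → Prop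
  | var (Γ : List ℕ) (a : ℕ) : WfTm (a :: Γ) (.var a)
  | weak {Γ : List ℕ} {a : ℕ} (b : ℕ) : a ≠ b → WfTm Γ (.var a) → WfTm (b :: Γ) (.var a)
  | app {Γ M N} : WfTm Γ M → WfTm Γ N → WfTm Γ (.app M N)
  | lam {Γ a M} : WfTm (a :: Γ) M → WfTm Γ (.lam a M)
  | clos {Γ s Δ M} : WfSub Γ s Δ → WfTm Δ M → WfTm Γ (.clos s M)
/-- `WfSub Γ s Δ` is the judgement `Γ ⊢ s ▷ Δ`. -/
inductive WfSub : List ℕ → Subst → List ℕ → Prop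
  | id (Γ) : WfSub Γ .id Γ
  | pi (Γ a) : WfSub (a :: Γ) (.pi a) Γ
  | cons {Γ s Δ N} (a) : WfSub Γ s Δ → WfTm Γ N → WfSub Γ (.cons s N a) (a :: Δ)
  | comp {Γ s Δ q Θ} : WfSub Γ s Δ → WfSub Δ q Θ → WfSub Γ (.comp s q) Θ
end

/-- The operator `O_{λa}` on sequences of finite sets (sequences are 0-indexed:
index `n` corresponds to the paper's index `n+1`). -/
def Olam (a : ℕ) (A : ℕ → Finset ℕ) : ℕ → Finset ℕ
  | 0 => (A 0).erase a ∪ A 1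
  | n + 1 => A (n + 2)

/-- The operator `O_π`. -/
def Opi (A : ℕ → Finset ℕ) : ℕ → Finset ℕ
  | 0 => ∅
  | n + 1 => A n

mutual
/-- The free-variable sequence of a term: `FV M n` is the paper's `FV_{n+1}(M)`. -/
def FV : Tm → ℕ → Finset ℕ
  | .var a => fun n => if n = 0 then {a} else ∅
  | .app M N => fun n => FV M n ∪ FV N n
  | .lam a M => Olam a (FV M)
  | .clos s M => Osub s (FV M)
/-- The operator `O_s` associated with a substitution `s`. -/
def Osub : Subst → (ℕ → Finset ℕ) → (ℕ → Finset ℕ)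
  | .id => fun A => A
  | .pi _ => fun A => Opi A
  | .cons s N a => fun A n => Osub s (Olam a A) n ∪ FV N n
  | .comp s q => fun A => Osub s (Osub q A)
end

/-- Iterated abstraction `λΓ.M` (recall the head of the list is the rightmost variable). -/
def lamCtx : List ℕ → Tm → Tm
  | [], M => M
  | a :: Γ, M => lamCtx Γ (.lam a M)

/-- Free variables of a judgement: `FV(Γ ⊢ M) = FV(λΓ.M)`. -/
def FVJ (Γ : List ℕ) (M : Tm) : ℕ → Finset ℕ := FV (lamCtx Γ M)

/-- Iterated lifting `⇑_Δ(s)`. -/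
def Uparrow : List ℕ → Subst → Subst
  | [], s => s
  | a :: Δ, s => .cons (.comp (.pi a) (Uparrow Δ s)) (.var a) a

/- One-step reduction of the λπ-calculus (compatible closure).  The Boolean
parameter tells whether the rule `Beta` is allowed: `StepTm true` is λπ-reduction,
`StepTm false` is σπα-reduction. -/
mutual
inductive StepTm : Bool → Tm → Tm → Prop
  | beta {a : ℕ} {M N : Tm} :
      StepTm true (.app (.lam a M) N) (.clos (.cons .id N a) M)
  | abs {β : Bool} {s : Subst} {a : ℕ} {M : Tm} :
      StepTm β (.clos s (.lam a M))
        (.lam a (.clos (.cons (.comp (.pi a) s) (.var a) a) M))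
  | app {β : Bool} {s : Subst} {M N : Tm} :
      StepTm β (.clos s (.app M N)) (.app (.clos s M) (.clos s N))
  | consVar {β : Bool} {s : Subst} {N : Tm} {a : ℕ} :
      StepTm β (.clos (.cons s N a) (.var a)) N
  | new {β : Bool} {s : Subst} {N : Tm} {a b : ℕ} : a ≠ b →
      StepTm β (.clos (.cons s N a) (.var b)) (.clos s (.var b))
  | idVar {β : Bool} {a : ℕ} : StepTm β (.clos .id (.var a)) (.var a)
  | clos {β : Bool} {s q : Subst} {M : Tm} :
      StepTm β (.clos s (.clos q M)) (.clos (.comp s q) M)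
  | pi1 {β : Bool} {a b : ℕ} : a ≠ b → StepTm β (.clos (.pi a) (.var b)) (.var b)
  | pi2 {β : Bool} {s : Subst} {a b : ℕ} : a ≠ b →
      StepTm β (.clos (.comp s (.pi a)) (.var b)) (.clos s (.var b))
  | alpha1 {β : Bool} {a b : ℕ} {M : Tm} :
      (∃ i, a ∈ FV (.lam a M) i) → (∀ i, b ∉ FV (.lam a M) i) →
      StepTm β (.lam a M) (.lam b (.clos (.cons (.pi b) (.var b) a) M))
  | lamCong {β : Bool} {a : ℕ} {M₁ M₂ : Tm} :
      StepTm β M₁ M₂ → StepTm β (.lam a M₁) (.lam a M₂)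
  | appL {β : Bool} {M₁ M₂ N : Tm} : StepTm β M₁ M₂ → StepTm β (.app M₁ N) (.app M₂ N)
  | appR {β : Bool} {M N₁ N₂ : Tm} : StepTm β N₁ N₂ → StepTm β (.app M N₁) (.app M N₂)
  | closL {β : Bool} {s₁ s₂ : Subst} {M : Tm} :
      StepSub β s₁ s₂ → StepTm β (.clos s₁ M) (.clos s₂ M)
  | closR {β : Bool} {s : Subst} {M₁ M₂ : Tm} :
      StepTm β M₁ M₂ → StepTm β (.clos s M₁) (.clos s M₂)
inductive StepSub : Bool → Subst → Subst → Prop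
  | ass {β : Bool} {s q r : Subst} :
      StepSub β (.comp s (.comp q r)) (.comp (.comp s q) r)
  | idR {β : Bool} {s : Subst} : StepSub β (.comp s .id) s
  | idShift {β : Bool} {a : ℕ} : StepSub β (.comp .id (.pi a)) (.pi a)
  | consShift {β : Bool} {s : Subst} {N : Tm} {a : ℕ} :
      StepSub β (.comp (.cons s N a) (.pi a)) s
  | map {β : Bool} {s q : Subst} {N : Tm} {a : ℕ} :
      StepSub β (.comp s (.cons q N a)) (.cons (.comp s q) (.clos s N) a)
  | consL {β : Bool} {s₁ s₂ : Subst} {N : Tm} {a : ℕ} :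
      StepSub β s₁ s₂ → StepSub β (.cons s₁ N a) (.cons s₂ N a)
  | consR {β : Bool} {s : Subst} {N₁ N₂ : Tm} {a : ℕ} :
      StepTm β N₁ N₂ → StepSub β (.cons s N₁ a) (.cons s N₂ a)
  | compL {β : Bool} {s₁ s₂ q : Subst} :
      StepSub β s₁ s₂ → StepSub β (.comp s₁ q) (.comp s₂ q)
  | compR {β : Bool} {s q₁ q₂ : Subst} :
      StepSub β q₁ q₂ → StepSub β (.comp s q₁) (.comp s q₂)
end

/-- One-step reduction `⇝` on judgements `Γ ⊢ M`, including the rule `α₂`.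
`StepJ true` is λπ, `StepJ false` is σπα. -/
inductive StepJ (β : Bool) : List ℕ × Tm → List ℕ × Tm → Prop
  | step {Γ : List ℕ} {M₁ M₂ : Tm} : StepTm β M₁ M₂ → StepJ β (Γ, M₁) (Γ, M₂)
  | alpha2 {Γ Δ : List ℕ} {a b : ℕ} {M : Tm} :
      (∃ i, a ∈ FVJ (Δ ++ [a]) M i) → (∀ i, b ∉ FVJ (Δ ++ [a]) M i) →
      StepJ β (Δ ++ a :: Γ, M)
        (Δ ++ b :: Γ, .clos (Uparrow Δ (.cons (.pi b) (.var b) a)) M)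

/- Name-free (de Bruijn) terms and substitutions. -/
mutual
inductive NTm : Type
  | one : NTm
  | app : NTm → NTm → NTm
  | lam : NTm → NTm
  | clos : NSub → NTm → NTm
inductive NSub : Type
  | id : NSub
  | pi : NSub
  | cons : NSub → NTm → NSub
  | comp : NSub → NSub → NSub
end

/-- `piIter n` is the left-nested composition of `n+1` copies of `π`. -/
def piIter : ℕ → NSub
  | 0 => .pi
  | k + 1 => .comp (piIter k) .pi

/-- `dbr n` is the de Bruijn index `n+1̲`: `dbr 0 = 1` and
`dbr (n+1) = ((…(π∘π)∘…)∘π)∘1` with `n+1` occurrences of `π`. -/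
def dbr : ℕ → NTm
  | 0 => .one
  | n + 1 => .clos (piIter n) .one

/- One-step reduction of λσ (`NStepTm true`) resp. σ (`NStepTm false`)
on name-free terms/substitutions. -/
mutual
inductive NStepTm : Bool → NTm → NTm → Prop
  | beta {U V : NTm} : NStepTm true (.app (.lam U) V) (.clos (.cons .id V) U)
  | abs {β : Bool} {u : NSub} {U : NTm} :
      NStepTm β (.clos u (.lam U)) (.lam (.clos (.cons (.comp .pi u) .one) U))
  | app {β : Bool} {u : NSub} {U V : NTm} :
      NStepTm β (.clos u (.app U V)) (.app (.clos u U) (.clos u V))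
  | consVar {β : Bool} {u : NSub} {V : NTm} : NStepTm β (.clos (.cons u V) .one) V
  | idVar {β : Bool} : NStepTm β (.clos .id .one) .one
  | clos {β : Bool} {u v : NSub} {U : NTm} :
      NStepTm β (.clos u (.clos v U)) (.clos (.comp u v) U)
  | lamCong {β : Bool} {U₁ U₂ : NTm} : NStepTm β U₁ U₂ → NStepTm β (.lam U₁) (.lam U₂)
  | appL {β : Bool} {U₁ U₂ V : NTm} : NStepTm β U₁ U₂ → NStepTm β (.app U₁ V) (.app U₂ V)
  | appR {β : Bool} {U V₁ V₂ : NTm} : NStepTm β V₁ V₂ → NStepTm β (.app U V₁) (.app U V₂)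
  | closL {β : Bool} {u₁ u₂ : NSub} {U : NTm} :
      NStepSub β u₁ u₂ → NStepTm β (.clos u₁ U) (.clos u₂ U)
  | closR {β : Bool} {u : NSub} {U₁ U₂ : NTm} :
      NStepTm β U₁ U₂ → NStepTm β (.clos u U₁) (.clos u U₂)
inductive NStepSub : Bool → NSub → NSub → Prop
  | ass {β : Bool} {u v w : NSub} : NStepSub β (.comp u (.comp v w)) (.comp (.comp u v) w)
  | idR {β : Bool} {u : NSub} : NStepSub β (.comp u .id) u
  | idShift {β : Bool} : NStepSub β (.comp .id .pi) .pi
  | consShift {β : Bool} {u : NSub} {V : NTm} : NStepSub β (.comp (.cons u V) .pi) u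
  | map {β : Bool} {u v : NSub} {V : NTm} :
      NStepSub β (.comp u (.cons v V)) (.cons (.comp u v) (.clos u V))
  | consL {β : Bool} {u₁ u₂ : NSub} {V : NTm} :
      NStepSub β u₁ u₂ → NStepSub β (.cons u₁ V) (.cons u₂ V)
  | consR {β : Bool} {u : NSub} {V₁ V₂ : NTm} :
      NStepTm β V₁ V₂ → NStepSub β (.cons u V₁) (.cons u V₂)
  | compL {β : Bool} {u₁ u₂ v : NSub} :
      NStepSub β u₁ u₂ → NStepSub β (.comp u₁ v) (.comp u₂ v)
  | compR {β : Bool} {u v₁ v₂ : NSub} :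
      NStepSub β v₁ v₂ → NStepSub β (.comp u v₁) (.comp u v₂)
end

/- The correspondence `(Γ ⊢ M) ⟹ U` resp. `(Γ ⊢ s ▷ Δ) ⟹ u` between judgements and
name-free terms/substitutions (Definition 7.6 of the paper). -/
mutual
inductive TrTm : List ℕ → Tm → NTm → Prop
  | var (Γ : List ℕ) (a : ℕ) : TrTm (a :: Γ) (.var a) (dbr 0)
  | weak {Γ : List ℕ} {a : ℕ} {n : ℕ} (b : ℕ) : a ≠ b →
      TrTm Γ (.var a) (dbr n) → TrTm (b :: Γ) (.var a) (dbr (n + 1))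
  | app {Γ M N U V} : TrTm Γ M U → TrTm Γ N V → TrTm Γ (.app M N) (.app U V)
  | lam {Γ a M U} : TrTm (a :: Γ) M U → TrTm Γ (.lam a M) (.lam U)
  | clos {Γ s Δ M u U} : TrSub Γ s Δ u → TrTm Δ M U → TrTm Γ (.clos s M) (.clos u U)
inductive TrSub : List ℕ → Subst → List ℕ → NSub → Prop
  | id (Γ) : TrSub Γ .id Γ .id
  | pi (Γ a) : TrSub (a :: Γ) (.pi a) Γ .pi
  | cons {Γ s Δ N u V} (a) : TrSub Γ s Δ u → TrTm Γ N V →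
      TrSub Γ (.cons s N a) (a :: Δ) (.cons u V)
  | comp {Γ s Δ q Θ u v} : TrSub Γ s Δ u → TrSub Δ q Θ v →
      TrSub Γ (.comp s q) Θ (.comp u v)
end


theorem wf_uparrow {Γ Γ' : List ℕ} {s : Subst} (hs : WfSub Γ s Γ') :
    ∀ Δ : List ℕ, WfSub (Δ ++ Γ) (Uparrow Δ s) (Δ ++ Γ')
  | [] => hs
  | c :: Δ => .cons c (.comp (.pi _ c) (wf_uparrow hs Δ)) (.var _ c)

/-- Subject reduction, part two (the α₂-step preserves derivability). -/
theorem subject_reduction_two {Γ Δ : List ℕ} {a b : ℕ} {M : Tm}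
    (h : WfTm (Δ ++ a :: Γ) M)
    (ha : ∃ i, a ∈ FVJ (Δ ++ [a]) M i)
    (hb : ∀ i, b ∉ FVJ (Δ ++ [a]) M i) :
    WfTm (Δ ++ b :: Γ) (.clos (Uparrow Δ (.cons (.pi b) (.var b) a)) M) := by
  exact .clos (wf_uparrow (.cons a (.pi _ b) (.var _ b)) Δ) h
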